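/- arXiv:2101.05686 — 2 statements merged into one kernel-verified Lean document; each statement's English description precedes it below -/
import Mathlib

section
/- Let p_H, p_V ∈ [0,1] and r ∈ [0,1]. Let ρ₁ = diag(r, 1−r) be a 2×2 density matrix, and let ρ₂ be the 4×4 density matrix ρ₂ = r²·e₁e₁ᴴ + 2r(1−r)·|φ₋⟩⟨φ₋| + (1−r)²·e₄e₄ᴴ, where e₁, e₄ are the first and fourth standard basis vectors of ℂ⁴ and |φ₋⟩ = (0, 1/√2, −1/√2, 0)ᵀ. Then S((Γ⊗Γ)(ρ₂)) = 2·S(Γ(ρ₁)) − 2 p_H p_V r(1−r)·log 2 and S((Γ̃⊗Γ̃)(ρ₂)) = 2·S(Γ̃(ρ₁)) − 2 (1−p_H)(1−p_V) r(1−r)·log 2. -/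
open Matrix ComplexOrder Kronecker

/-- The von Neumann entropy S(ρ) = Σ_i −λ_i log λ_i over the eigenvalues of a Hermitian
matrix (and 0 on non-Hermitian matrices). Natural logarithm, 0 log 0 = 0. -/
noncomputable def vnEnt {n : Type*} [Fintype n] [DecidableEq n] (ρ : Matrix n n ℂ) : ℝ :=
  if h : ρ.IsHermitian then ∑ i, -(h.eigenvalues i * Real.log (h.eigenvalues i)) else 0

/-- The generalized erasure channel of the polarization dependent loss operation. -/
noncomputable def GammaPDL (pH pV : ℝ) (ρ : Matrix (Fin 2) (Fin 2) ℂ) :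
    Matrix (Fin 3) (Fin 3) ℂ :=
  !![(pH : ℂ) * ρ 0 0, (Real.sqrt (pH * pV) : ℂ) * ρ 0 1, 0;
     (Real.sqrt (pH * pV) : ℂ) * ρ 1 0, (pV : ℂ) * ρ 1 1, 0;
     0, 0, ρ.trace - (pH : ℂ) * ρ 0 0 - (pV : ℂ) * ρ 1 1]

/-- The complementary channel of the generalized erasure channel of the polarization
dependent loss operation. -/
noncomputable def GammaPDLc (pH pV : ℝ) (ρ : Matrix (Fin 2) (Fin 2) ℂ) :
    Matrix (Fin 3) (Fin 3) ℂ :=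
  !![(pH : ℂ) * ρ 0 0 + (pV : ℂ) * ρ 1 1, 0, 0;
     0, ((1 - pH : ℝ) : ℂ) * ρ 0 0, (Real.sqrt ((1 - pH) * (1 - pV)) : ℂ) * ρ 0 1;
     0, (Real.sqrt ((1 - pH) * (1 - pV)) : ℂ) * ρ 1 0, ((1 - pV : ℝ) : ℂ) * ρ 1 1]

/-- Kraus operators of the generalized erasure channel of the polarization dependent loss
operation. -/
noncomputable def KrPDL (pH pV : ℝ) : Fin 3 → Matrix (Fin 3) (Fin 2) ℂ :=
  ![!![(Real.sqrt pH : ℂ), 0; 0, (Real.sqrt pV : ℂ); 0, 0],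
    !![0, 0; 0, 0; (Real.sqrt (1 - pH) : ℂ), 0],
    !![0, 0; 0, 0; 0, (Real.sqrt (1 - pV) : ℂ)]]

/-- Kraus operators of the complementary channel of the generalized erasure channel of the
polarization dependent loss operation. -/
noncomputable def LrPDL (pH pV : ℝ) : Fin 3 → Matrix (Fin 3) (Fin 2) ℂ :=
  ![!![(Real.sqrt pH : ℂ), 0; 0, 0; 0, 0],
    !![0, (Real.sqrt pV : ℂ); 0, 0; 0, 0],
    !![0, 0; (Real.sqrt (1 - pH) : ℂ), 0; 0, (Real.sqrt (1 - pV) : ℂ)]]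

set_option linter.unusedSimpArgs false

lemma vnEnt_of_charpoly {n : Type*} [Fintype n] [DecidableEq n] (M : Matrix n n ℂ)
    (hM : M.IsHermitian) (d : n → ℝ)
    (h : M.charpoly = (Matrix.diagonal (fun i => (d i : ℂ))).charpoly) :
    vnEnt M = ∑ i, Real.negMulLog (d i) := by
  have h1 : M.charpoly.roots = Multiset.map (fun i => ((hM.eigenvalues i : ℝ) : ℂ)) Finset.univ.val := by
    rw [hM.roots_charpoly_eq_eigenvalues]; rfl
  have h2 : M.charpoly.roots = Multiset.map (fun i => ((d i : ℝ) : ℂ)) Finset.univ.val := by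
    rw [h, Matrix.charpoly_diagonal]
    rw [← Polynomial.roots_multiset_prod_X_sub_C (Multiset.map (fun i => ((d i : ℝ) : ℂ)) Finset.univ.val),
      Multiset.map_map]
    rfl
  have h3 := h1.symm.trans h2
  have h4 := congrArg (fun s : Multiset ℂ => (s.map (fun z => Real.negMulLog z.re)).sum) h3
  simp only [Multiset.map_map, Function.comp_def, Complex.ofReal_re] at h4
  rw [vnEnt, dif_pos hM]
  exact (Finset.sum_congr rfl fun i _ => by rw [Real.negMulLog, neg_mul]).trans h4

lemma vnEnt_of_similar {n : Type*} [Fintype n] [DecidableEq n] (M P Q : Matrix n n ℂ)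
    (hM : M.IsHermitian) (d : n → ℝ) (hPQ : P * Q = 1)
    (h : M * P = P * Matrix.diagonal (fun i => (d i : ℂ))) :
    vnEnt M = ∑ i, Real.negMulLog (d i) := by
  apply vnEnt_of_charpoly M hM
  have hQP : Q * P = 1 := mul_eq_one_comm.mp hPQ
  have : M = P * (Matrix.diagonal (fun i => (d i : ℂ)) * Q) := by
    rw [← mul_assoc, ← h, mul_assoc, hPQ, mul_one]
  rw [this, Matrix.charpoly_mul_comm, mul_assoc, hQP, mul_one]

lemma vnEnt_diag {n : Type*} [Fintype n] [DecidableEq n] (d : n → ℝ) :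
    vnEnt (Matrix.diagonal (fun i => (d i : ℂ))) = ∑ i, Real.negMulLog (d i) := by
  apply vnEnt_of_charpoly _ _ d rfl
  rw [Matrix.isHermitian_diagonal_iff]
  intro i
  simp [isSelfAdjoint_iff]

/-- The output matrix: diagonal apart from one two-dimensional block. -/
noncomputable def outM (d : Fin 3 → ℝ) (i j : Fin 3) :
    Matrix (Fin 3 × Fin 3) (Fin 3 × Fin 3) ℂ := fun p q =>
  if p = q then ((d p.1 * d p.2 : ℝ) : ℂ)
  else if (p = (i, j) ∧ q = (j, i)) ∨ (p = (j, i) ∧ q = (i, j)) then -((d i * d j : ℝ) : ℂ) else 0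

lemma blk {n : Type*} [Fintype n] [DecidableEq n] (d : n → ℝ) (a b : n) (hab : a ≠ b) (M : Matrix n n ℂ)
    (x : ℝ) (ha : d a = x) (hb : d b = x)
    (hM : M = Matrix.diagonal (fun i => (d i : ℂ)) - (x : ℂ) • (Matrix.single a b 1 + Matrix.single b a 1)) :
    vnEnt M = ∑ i, Real.negMulLog (Function.update (Function.update d a (2 * x)) b 0 i) := by
  apply vnEnt_of_similar M (1 + Matrix.single a b 1 - Matrix.single b a 1)
    (1 - (1/2 : ℂ) • (Matrix.single a b 1 - Matrix.single b a 1 + Matrix.single a a 1 + Matrix.single b b 1))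
  · rw [hM]
    ext p q
    simp only [conjTranspose_apply, Matrix.sub_apply, Matrix.smul_apply, Matrix.add_apply, diagonal_apply, single_apply]
    have hd : star (if q = p then (d q : ℂ) else 0) = if p = q then (d p : ℂ) else 0 := by
      by_cases h : p = q
      · subst h; simp
      · simp [h, Ne.symm h]
    have ho : ∀ s t u v : n, star (if s = t ∧ u = v then (1 : ℂ) else 0) = if u = v ∧ s = t then 1 else 0 := by
      intro s t u v
      by_cases h1 : s = t <;> by_cases h2 : u = v <;> simp [h1, h2]
    rw [star_sub, star_smul, star_add, hd, ho, ho, add_comm (ite _ _ _)]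
    simp
  · simp only [add_mul, sub_mul, mul_sub, mul_add, one_mul, mul_one, mul_smul_comm,
      Matrix.single_mul_single_same, Matrix.single_mul_single_of_ne _ _ _ _ hab,
      Matrix.single_mul_single_of_ne _ _ _ _ hab.symm]
    module
  · subst hM
    have e : Matrix.diagonal (fun i => ((Function.update (Function.update d a (2 * x)) b 0 i : ℝ) : ℂ))
       = Matrix.diagonal (fun i => (d i : ℂ)) + (x : ℂ) • Matrix.single a a 1 - (x : ℂ) • Matrix.single b b 1 := by
      ext p q
      simp only [Matrix.sub_apply, Matrix.smul_apply, Matrix.add_apply, diagonal_apply, single_apply, Function.update_apply]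
      by_cases h : p = q
      · subst h
        by_cases h1 : p = a
        · subst h1; simp [hab, hab.symm, ha]; ring
        · by_cases h2 : p = b
          · subst h2; simp [h1, hb, Ne.symm h1]
          · simp [h1, h2, Ne.symm h1, Ne.symm h2]
      · have : ∀ c, ¬ (c = p ∧ c = q) := fun c hc => h (hc.1.symm.trans hc.2)
        simp [h, this]
    rw [e]
    simp only [add_mul, sub_mul, mul_sub, mul_add, one_mul, mul_one, mul_smul_comm, smul_mul_assoc,
      smul_add, smul_sub,
      Matrix.single_mul_single_same, Matrix.single_mul_single_of_ne _ _ _ _ hab,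
      Matrix.single_mul_single_of_ne _ _ _ _ hab.symm]
    have f1 : ∀ s t : n, d s = x → Matrix.diagonal (fun i => (d i : ℂ)) * Matrix.single s t (1 : ℂ) = (x : ℂ) • Matrix.single s t 1 := by
      intro s t hs
      ext p q
      simp only [diagonal_mul, Matrix.smul_apply, single_apply]
      by_cases h : s = p
      · subst h; simp [hs]
      · simp [h]
    have f2 : ∀ s t : n, d t = x → Matrix.single s t (1 : ℂ) * Matrix.diagonal (fun i => (d i : ℂ)) = (x : ℂ) • Matrix.single s t 1 := by
      intro s t hs
      ext p q
      simp only [mul_diagonal, Matrix.smul_apply, single_apply]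
      by_cases h : t = q
      · subst h; simp [hs]
      · simp [h]
    rw [f1 a b ha, f1 b a hb, f2 a b hb, f2 b a ha]
    module

lemma negMulLog_two_mul (x : ℝ) :
    Real.negMulLog (2 * x) = 2 * Real.negMulLog x - 2 * x * Real.log 2 := by
  rw [Real.negMulLog_mul]; simp only [Real.negMulLog]; ring

lemma vnEnt_outM (d : Fin 3 → ℝ) (hd : ∑ i, d i = 1) (i j : Fin 3) (hij : i ≠ j) :
    vnEnt (outM d i j) = 2 * vnEnt (Matrix.diagonal (fun i => (d i : ℂ)))
      - 2 * (d i * d j) * Real.log 2 := by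
  have hab : ((i, j) : Fin 3 × Fin 3) ≠ (j, i) := by
    intro h; exact hij (congrArg Prod.fst h)
  rw [vnEnt_diag, blk (fun p : Fin 3 × Fin 3 => d p.1 * d p.2) (i, j) (j, i) hab (outM d i j)
    (d i * d j) rfl (mul_comm _ _)]
  · have key : ∀ (g : Fin 3 × Fin 3 → ℝ) (y z : ℝ),
        ∑ p, Real.negMulLog (Function.update (Function.update g (i, j) y) (j, i) z p)
        = ∑ p, Real.negMulLog (g p) + (Real.negMulLog y - Real.negMulLog (g (i, j)))
          + (Real.negMulLog z - Real.negMulLog (g (j, i))) := by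
      intro g y z
      have : ∀ p, Real.negMulLog (Function.update (Function.update g (i, j) y) (j, i) z p)
        = Real.negMulLog (g p) + (if p = (i, j) then (Real.negMulLog y - Real.negMulLog (g (i, j))) else 0)
          + (if p = (j, i) then (Real.negMulLog z - Real.negMulLog (g (j, i))) else 0) := by
        intro p
        simp only [Function.update_apply]
        by_cases h1 : p = (j, i)
        · subst h1; simp [hab.symm]
        · by_cases h2 : p = (i, j)
          · subst h2; simp [hab]
          · simp [h1, h2]
      simp only [this, Finset.sum_add_distrib, Finset.sum_ite_eq', Finset.mem_univ, if_true]
    rw [key, negMulLog_two_mul, Fintype.sum_prod_type]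
    simp only [Real.negMulLog_mul, Finset.sum_add_distrib, ← Finset.sum_mul, ← Finset.mul_sum, hd]
    simp only [Real.negMulLog_zero]
    ring
  · ext p q
    simp only [outM, Matrix.sub_apply, Matrix.smul_apply, Matrix.add_apply, diagonal_apply, single_apply]
    by_cases h : p = q
    · subst h
      have h1 : ¬ ((i, j) = p ∧ (j, i) = p) := fun h => hab (h.1.trans h.2.symm)
      have h2 : ¬ ((j, i) = p ∧ (i, j) = p) := fun h => hab (h.2.trans h.1.symm)
      simp [h1, h2]
    · by_cases h1 : p = (i, j)
      · subst h1
        by_cases h2 : q = (j, i)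
        · subst h2; simp [hab, hij, hij.symm]
        · simp [h, h2, Ne.symm h2, hab, hab.symm]
      · by_cases h3 : p = (j, i)
        · subst h3
          by_cases h2 : q = (i, j)
          · subst h2; simp [hab, hij, hij.symm]
          · simp [h, h2, Ne.symm h2, hab, hab.symm]
        · simp [h, h1, h3, Ne.symm h1, Ne.symm h3]

/-- Entries of the two-letter input. -/
lemma rho_apply (r : ℝ) 
    (e1 e4 φ : Fin 2 × Fin 2 → ℂ)
    (he1 : e1 = fun p => if p = ((0 : Fin 2), (0 : Fin 2)) then 1 else 0)
    (he4 : e4 = fun p => if p = ((1 : Fin 2), (1 : Fin 2)) then 1 else 0)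
    (hφ : φ = fun p => if p = ((0 : Fin 2), (1 : Fin 2)) then ((1 / Real.sqrt 2 : ℝ) : ℂ)
      else if p = ((1 : Fin 2), (0 : Fin 2)) then (-(1 / Real.sqrt 2 : ℝ) : ℂ) else 0)
    (ρ₂ : Matrix (Fin 2 × Fin 2) (Fin 2 × Fin 2) ℂ)
    (hρ₂ : ρ₂ = ((r ^ 2 : ℝ) : ℂ) • Matrix.vecMulVec e1 (fun p => starRingEnd ℂ (e1 p))
      + ((2 * r * (1 - r) : ℝ) : ℂ) • Matrix.vecMulVec φ (fun p => starRingEnd ℂ (φ p))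
      + (((1 - r) ^ 2 : ℝ) : ℂ) • Matrix.vecMulVec e4 (fun p => starRingEnd ℂ (e4 p))) :
    ρ₂ = fun p q => ((![![![![r ^ 2, 0], ![0, 0]], ![![0, r * (1 - r)], ![-(r * (1 - r)), 0]]],
      ![![![0, -(r * (1 - r))], ![r * (1 - r), 0]], ![![0, 0], ![0, (1 - r) ^ 2]]]] p.1 p.2 q.1 q.2 : ℝ) : ℂ) := by
  have hs : ((Real.sqrt 2 : ℝ) : ℂ)⁻¹ * ((Real.sqrt 2 : ℝ) : ℂ)⁻¹ = 1 / 2 := by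
    rw [← mul_inv, ← Complex.ofReal_mul, Real.mul_self_sqrt (by norm_num)]; norm_num
  subst hρ₂ he1 he4 hφ
  ext ⟨a, b⟩ ⟨c, e⟩
  fin_cases a <;> fin_cases b <;> fin_cases c <;> fin_cases e <;>
    simp [vecMulVec_apply, hs] <;> ring1

/-- The coefficient tensor of a Kraus family. -/
noncomputable def krT (K : Fin 3 → Matrix (Fin 3) (Fin 2) ℂ) (a c : Fin 3) (x z : Fin 2) : ℂ :=
  K 0 a x * star (K 0 c z) + K 1 a x * star (K 1 c z) + K 2 a x * star (K 2 c z)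

set_option maxHeartbeats 4000000 in
lemma kraus_entry (K : Fin 3 → Matrix (Fin 3) (Fin 2) ℂ) (r : ℝ)
    (ρ₂ : Matrix (Fin 2 × Fin 2) (Fin 2 × Fin 2) ℂ)
    (h : ρ₂ = fun p q => ((![![![![r ^ 2, 0], ![0, 0]], ![![0, r * (1 - r)], ![-(r * (1 - r)), 0]]],
      ![![![0, -(r * (1 - r))], ![r * (1 - r), 0]], ![![0, 0], ![0, (1 - r) ^ 2]]]] p.1 p.2 q.1 q.2 : ℝ) : ℂ)) (a b c e : Fin 3) :
    (∑ i, ∑ j, (K i ⊗ₖ K j) * ρ₂ * (K i ⊗ₖ K j)ᴴ) (a, b) (c, e)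
     = (r : ℂ) ^ 2 * (krT K a c 0 0 * krT K b e 0 0) + (r : ℂ) * (1 - r) *
        (krT K a c 0 0 * krT K b e 1 1 - krT K a c 0 1 * krT K b e 1 0
          - krT K a c 1 0 * krT K b e 0 1 + krT K a c 1 1 * krT K b e 0 0)
       + (1 - (r : ℂ)) ^ 2 * (krT K a c 1 1 * krT K b e 1 1) := by
  have h' : ∀ x y z w, ρ₂ (x, y) (z, w) = ((![![![![r ^ 2, 0], ![0, 0]], ![![0, r * (1 - r)], ![-(r * (1 - r)), 0]]],
      ![![![0, -(r * (1 - r))], ![r * (1 - r), 0]], ![![0, 0], ![0, (1 - r) ^ 2]]]] x y z w : ℝ) : ℂ) := by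
    intro x y z w; rw [h]
  clear h
  have key : ∀ i j, ((K i ⊗ₖ K j) * ρ₂ * (K i ⊗ₖ K j)ᴴ) (a, b) (c, e)
     = (r : ℂ) ^ 2 * (K i a 0 * star (K i c 0) * (K j b 0 * star (K j e 0)))
       + (r : ℂ) * (1 - r) *
        (K i a 0 * star (K i c 0) * (K j b 1 * star (K j e 1))
         - K i a 0 * star (K i c 1) * (K j b 1 * star (K j e 0))
         - K i a 1 * star (K i c 0) * (K j b 0 * star (K j e 1))
         + K i a 1 * star (K i c 1) * (K j b 0 * star (K j e 0)))
       + (1 - (r : ℂ)) ^ 2 * (K i a 1 * star (K i c 1) * (K j b 1 * star (K j e 1))) := by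
    intro i j
    simp only [Matrix.mul_apply, Fintype.sum_prod_type, Fin.sum_univ_two, kroneckerMap_apply,
      conjTranspose_apply, h', star_mul']
    simp
    ring1
  simp only [Fin.sum_univ_three, Matrix.add_apply, key, krT]
  ring1

lemma krT_K (pH pV : ℝ) (a c : Fin 3) (x z : Fin 2) : krT (KrPDL pH pV) a c x z =
    if a = 2 then (if c = 2 ∧ x = z then ![(√(1 - pH) : ℂ), (√(1 - pV) : ℂ)] x ^ 2 else 0)
    else if a = x.castSucc ∧ c = z.castSucc then
      ![(√pH : ℂ), (√pV : ℂ)] x * ![(√pH : ℂ), (√pV : ℂ)] z else 0 := by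
  fin_cases a <;> fin_cases c <;> fin_cases x <;> fin_cases z <;>
    simp [krT, KrPDL, pow_two]

lemma krT_L (pH pV : ℝ) (a c : Fin 3) (x z : Fin 2) : krT (LrPDL pH pV) a c x z =
    if a = 0 then (if c = 0 ∧ x = z then ![(√pH : ℂ), (√pV : ℂ)] x ^ 2 else 0)
    else if a = x.succ ∧ c = z.succ then
      ![(√(1 - pH) : ℂ), (√(1 - pV) : ℂ)] x * ![(√(1 - pH) : ℂ), (√(1 - pV) : ℂ)] z else 0 := by
  fin_cases a <;> fin_cases c <;> fin_cases x <;> fin_cases z <;>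
    simp [krT, LrPDL, pow_two]

set_option maxHeartbeats 4000000 in
lemma outK (pH pV r : ℝ) (ρ₂ : Matrix (Fin 2 × Fin 2) (Fin 2 × Fin 2) ℂ)
    (h : ρ₂ = fun p q => ((![![![![r ^ 2, 0], ![0, 0]], ![![0, r * (1 - r)], ![-(r * (1 - r)), 0]]],
      ![![![0, -(r * (1 - r))], ![r * (1 - r), 0]], ![![0, 0], ![0, (1 - r) ^ 2]]]] p.1 p.2 q.1 q.2 : ℝ) : ℂ)) :
    ∑ i, ∑ j, (KrPDL pH pV i ⊗ₖ KrPDL pH pV j) * ρ₂ * (KrPDL pH pV i ⊗ₖ KrPDL pH pV j)ᴴ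
     = outM ![√pH ^ 2 * r, √pV ^ 2 * (1 - r), √(1 - pH) ^ 2 * r + √(1 - pV) ^ 2 * (1 - r)] 0 1 := by
  ext ⟨a, b⟩ ⟨c, e⟩
  rw [kraus_entry _ r ρ₂ h]
  simp only [krT_K]
  fin_cases a <;> fin_cases b <;> fin_cases c <;> fin_cases e <;>
    simp [outM, -mul_eq_zero] <;> ring1

set_option maxHeartbeats 4000000 in
lemma outL (pH pV r : ℝ) (ρ₂ : Matrix (Fin 2 × Fin 2) (Fin 2 × Fin 2) ℂ)
    (h : ρ₂ = fun p q => ((![![![![r ^ 2, 0], ![0, 0]], ![![0, r * (1 - r)], ![-(r * (1 - r)), 0]]],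
      ![![![0, -(r * (1 - r))], ![r * (1 - r), 0]], ![![0, 0], ![0, (1 - r) ^ 2]]]] p.1 p.2 q.1 q.2 : ℝ) : ℂ)) :
    ∑ i, ∑ j, (LrPDL pH pV i ⊗ₖ LrPDL pH pV j) * ρ₂ * (LrPDL pH pV i ⊗ₖ LrPDL pH pV j)ᴴ
     = outM ![√pH ^ 2 * r + √pV ^ 2 * (1 - r), √(1 - pH) ^ 2 * r, √(1 - pV) ^ 2 * (1 - r)] 1 2 := by
  ext ⟨a, b⟩ ⟨c, e⟩
  rw [kraus_entry _ r ρ₂ h]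
  simp only [krT_L]
  fin_cases a <;> fin_cases b <;> fin_cases c <;> fin_cases e <;>
    simp [outM, -mul_eq_zero] <;> ring1

/-- entropy identities for the entangled two-letter input ρ₂ versus the
product input ρ₁ ⊗ ρ₁ of the generalized erasure channel of the polarization dependent
loss operation and its complementary channel. -/
theorem pdl_two_letter_entropy_identities (pH pV r : ℝ)
    (hH : pH ∈ Set.Icc (0:ℝ) 1) (hV : pV ∈ Set.Icc (0:ℝ) 1) (hr : r ∈ Set.Icc (0:ℝ) 1)
    (e1 e4 φ : Fin 2 × Fin 2 → ℂ)
    (he1 : e1 = fun p => if p = ((0 : Fin 2), (0 : Fin 2)) then 1 else 0)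
    (he4 : e4 = fun p => if p = ((1 : Fin 2), (1 : Fin 2)) then 1 else 0)
    (hφ : φ = fun p => if p = ((0 : Fin 2), (1 : Fin 2)) then ((1 / Real.sqrt 2 : ℝ) : ℂ)
      else if p = ((1 : Fin 2), (0 : Fin 2)) then (-(1 / Real.sqrt 2 : ℝ) : ℂ) else 0)
    (ρ₂ : Matrix (Fin 2 × Fin 2) (Fin 2 × Fin 2) ℂ)
    (hρ₂ : ρ₂ = ((r ^ 2 : ℝ) : ℂ) • Matrix.vecMulVec e1 (fun p => starRingEnd ℂ (e1 p))
      + ((2 * r * (1 - r) : ℝ) : ℂ) • Matrix.vecMulVec φ (fun p => starRingEnd ℂ (φ p))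
      + (((1 - r) ^ 2 : ℝ) : ℂ) • Matrix.vecMulVec e4 (fun p => starRingEnd ℂ (e4 p))) :
    vnEnt (∑ i, ∑ j, (KrPDL pH pV i ⊗ₖ KrPDL pH pV j) * ρ₂ *
        (KrPDL pH pV i ⊗ₖ KrPDL pH pV j)ᴴ)
      = 2 * vnEnt (GammaPDL pH pV !![(r : ℂ), 0; 0, ((1 - r : ℝ) : ℂ)])
        - 2 * pH * pV * (r * (1 - r)) * Real.log 2 ∧
    vnEnt (∑ i, ∑ j, (LrPDL pH pV i ⊗ₖ LrPDL pH pV j) * ρ₂ *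
        (LrPDL pH pV i ⊗ₖ LrPDL pH pV j)ᴴ)
      = 2 * vnEnt (GammaPDLc pH pV !![(r : ℂ), 0; 0, ((1 - r : ℝ) : ℂ)])
        - 2 * ((1 - pH) * (1 - pV)) * (r * (1 - r)) * Real.log 2 := by
  have hρ := rho_apply r e1 e4 φ he1 he4 hφ ρ₂ hρ₂
  have s1 := Real.sq_sqrt hH.1
  have s2 := Real.sq_sqrt hV.1
  have s3 := Real.sq_sqrt (sub_nonneg.mpr hH.2)
  have s4 := Real.sq_sqrt (sub_nonneg.mpr hV.2)
  constructor
  · rw [outK pH pV r ρ₂ hρ, s1, s2, s3, s4, vnEnt_outM _ _ 0 1 (by decide)]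
    · congr 1
      · congr 2
        ext a b
        fin_cases a <;> fin_cases b <;> simp [GammaPDL, Matrix.trace, Fin.sum_univ_two]
        ring
      · simp [-mul_eq_mul_right_iff, -mul_eq_mul_left_iff]; ring
    · simp [Fin.sum_univ_three]; ring
  · rw [outL pH pV r ρ₂ hρ, s1, s2, s3, s4, vnEnt_outM _ _ 1 2 (by decide)]
    · congr 1
      · congr 2
        ext a b
        fin_cases a <;> fin_cases b <;> simp [GammaPDLc]
      · simp [-mul_eq_mul_right_iff, -mul_eq_mul_left_iff]; ring
    · simp [Fin.sum_univ_three]; ring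
end

section
/- Let p_H, p_V satisfy 1/2 < p_H < 1 and 0 < p_V < 1 − p_H. Then the two-letter coherent information of the generalized erasure channel of the polarization dependent loss operation is strictly superadditive: sup over 4×4 density matrices ρ of [S((Γ⊗Γ)(ρ)) − S((Γ̃⊗Γ̃)(ρ))] > 2 · (sup over 2×2 density matrices σ of [S(Γ(σ)) − S(Γ̃(σ))]). -/
open Matrix ComplexOrder Kronecker

set_option linter.unusedSimpArgs false

theorem vnEnt_of_charpoly_s19 {n : Type*} [Fintype n] [DecidableEq n] (A : Matrix n n ℂ)
    (hA : A.IsHermitian) (f : n → ℝ)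
    (h : A.charpoly = ∏ i, (Polynomial.X - Polynomial.C (f i : ℂ))) :
    vnEnt A = ∑ i, Real.negMulLog (f i) := by
  have h1 := hA.roots_charpoly_eq_eigenvalues
  have h2 : A.charpoly.roots = Multiset.map (fun i => (f i : ℂ)) Finset.univ.val := by
    rw [h, Polynomial.roots_prod _ _ (by
      rw [Finset.prod_ne_zero_iff]; intro i _; exact Polynomial.X_sub_C_ne_zero _)]
    simp
  rw [h2] at h1
  have h3 := congrArg (fun m => (Multiset.map (fun z : ℂ => Real.negMulLog z.re) m).sum) h1
  simp only [Multiset.map_map] at h3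
  rw [vnEnt, dif_pos hA]
  have e1 : (∑ i, Real.negMulLog (f i)) = _ := h3
  rw [e1]
  apply Finset.sum_congr rfl
  intro i _
  simp [Real.negMulLog]

theorem vnEnt_of_conj {n : Type*} [Fintype n] [DecidableEq n] (A U V : Matrix n n ℂ)
    (hA : A.IsHermitian) (f : n → ℝ) (hUV : V * U = 1)
    (h : A * U = U * Matrix.diagonal (fun i => (f i : ℂ))) :
    vnEnt A = ∑ i, Real.negMulLog (f i) := by
  apply vnEnt_of_charpoly_s19 A hA f
  have hVU : U * V = 1 := mul_eq_one_comm.mp hUV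
  have e : A = U * (Matrix.diagonal (fun i => (f i : ℂ)) * V) := by
    rw [← Matrix.mul_assoc, ← h, Matrix.mul_assoc, hVU, Matrix.mul_one]
  rw [e, Matrix.charpoly_mul_comm, Matrix.mul_assoc, hUV, Matrix.mul_one,
    Matrix.charpoly_diagonal]

theorem vnEnt_pair (f : Fin 3 × Fin 3 → ℝ) (p q : Fin 3 × Fin 3) (hpq : p ≠ q) (m : ℝ)
    (hp : f p = m) (hq : f q = m) (hm : 0 ≤ m) :
    vnEnt (Matrix.diagonal (fun i => (f i : ℂ)) + (Matrix.single p q (m : ℂ)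
      + Matrix.single q p (m : ℂ))) = (∑ i, Real.negMulLog (f i)) - 2 * m * Real.log 2 := by
  set g : Fin 3 × Fin 3 → ℝ := Function.update (Function.update f p (2 * m)) q 0 with hg
  have hgp : g p = 2 * m := by simp [hg, hpq]
  have hgq : g q = 0 := by simp [hg]
  have hgo : ∀ i, i ≠ p → i ≠ q → g i = f i := by intro i h1 h2; simp [hg, h1, h2]
  have key := vnEnt_of_conj (Matrix.diagonal (fun i => (f i : ℂ)) + (Matrix.single p q (m : ℂ)
      + Matrix.single q p (m : ℂ)))
      (1 + Matrix.single q p 1 + Matrix.single p q (-1/2) + Matrix.single q q (-1/2))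
      (1 + Matrix.single p p (-1/2) + Matrix.single p q (1/2) + Matrix.single q p (-1)) ?_ g ?_ ?_
  · rw [key]
    have s : ∀ F : Fin 3 × Fin 3 → ℝ, ∑ i, F i = F p + F q + ∑ i ∈ (Finset.univ.erase p).erase q, F i := by
      intro F
      rw [add_assoc, Finset.add_sum_erase _ _ (by simp [hpq.symm]), Finset.add_sum_erase _ _ (by simp)]
    rw [s, s (fun i => Real.negMulLog (f i)), hgp, hgq, hp, hq]
    have : ∑ i ∈ (Finset.univ.erase p).erase q, Real.negMulLog (g i)
        = ∑ i ∈ (Finset.univ.erase p).erase q, Real.negMulLog (f i) := by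
      apply Finset.sum_congr rfl
      intro i hi
      simp only [Finset.mem_erase] at hi
      rw [hgo i hi.2.1 hi.1]
    rw [this, Real.negMulLog_mul]
    simp [Real.negMulLog]
    ring
  · unfold Matrix.IsHermitian
    simp only [Matrix.conjTranspose_add, Matrix.conjTranspose_single, Matrix.diagonal_conjTranspose]
    congr 1
    · congr 1; ext i; simp
    · simp [add_comm]
  · simp only [mul_add, add_mul, Matrix.single_mul_single_same, Matrix.mul_one, Matrix.one_mul,
      Matrix.single_mul_single_of_ne _ _ _ _ hpq, Matrix.single_mul_single_of_ne _ _ _ _ hpq.symm]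
    ext i j
    simp only [Matrix.add_apply, Matrix.single_apply, Matrix.zero_apply]
    split_ifs <;> ring
  · simp only [mul_add, add_mul, Matrix.single_mul_single_same, Matrix.mul_one, Matrix.one_mul,
      Matrix.single_mul_single_of_ne _ _ _ _ hpq, Matrix.single_mul_single_of_ne _ _ _ _ hpq.symm]
    ext i j
    simp only [Matrix.add_apply, Matrix.single_apply, Matrix.zero_apply, Matrix.diagonal_mul,
      Matrix.mul_diagonal, Matrix.diagonal_apply]
    by_cases hip : i = p
    · subst hip
      by_cases hjp : j = i
      · subst hjp; simp [hpq, hpq.symm, hgp, hgq, hp, hq]; try ring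
      by_cases hjq : j = q
      · subst hjq; simp [hpq, hpq.symm, hgp, hgq, hp, hq]; try ring
      simp [Ne.symm hjp, Ne.symm hjq]
    by_cases hiq : i = q
    · subst hiq
      by_cases hjp : j = p
      · subst hjp; simp [hpq, hpq.symm, hgp, hgq, hp, hq]; try ring
      by_cases hjq : j = i
      · subst hjq; simp [hpq, hpq.symm, hgp, hgq, hp, hq]; try ring
      simp [Ne.symm hjp, Ne.symm hjq]
    by_cases hij : i = j
    · subst hij
      simp [Ne.symm hip, Ne.symm hiq, hgo i hip hiq]
    simp [Ne.symm hip, Ne.symm hiq, hij]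

/-- entropy function of a two-level block -/
noncomputable def EE (x y : ℝ) : ℝ := Real.negMulLog x + Real.negMulLog y - Real.negMulLog (x + y)

theorem EE_comm (x y : ℝ) : EE x y = EE y x := by
  unfold EE; rw [add_comm x y]; ring

theorem EE_zero (x : ℝ) : EE x 0 = 0 := by simp [EE]

theorem EE_anti_pos (D : ℝ) (hD : 0 < D) :
    AntitoneOn (fun x => EE x (D / x)) (Set.Ici (Real.sqrt D)) := by
  have hs : 0 < Real.sqrt D := Real.sqrt_pos.mpr hD
  have hder : ∀ x, 0 < x → HasDerivAt (fun x => EE x (D / x))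
      ((-Real.log x - 1) + (-Real.log (D / x) - 1) * (-D / x ^ 2)
        - (-Real.log (x + D / x) - 1) * (1 + (-D / x ^ 2))) x := by
    intro x hx
    have hdx : HasDerivAt (fun x => D / x) (-D / x ^ 2) x := by
      have := (hasDerivAt_inv hx.ne').const_mul D
      have e : -D / x ^ 2 = D * -(x ^ 2)⁻¹ := by ring
      rw [e]
      exact this
    have hy : 0 < D / x := by positivity
    have h1 := Real.hasDerivAt_negMulLog hx.ne'
    have h2 := (Real.hasDerivAt_negMulLog hy.ne').comp x hdx
    have h3 := (Real.hasDerivAt_negMulLog (x := x + D / x) (by positivity)).comp x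
      ((hasDerivAt_id x).add hdx)
    exact (h1.add h2).sub h3
  apply antitoneOn_of_deriv_nonpos (convex_Ici _)
  · intro x hx
    exact (hder x (lt_of_lt_of_le hs hx)).continuousAt.continuousWithinAt
  · intro x hx
    rw [interior_Ici] at hx
    exact (hder x (lt_trans hs hx)).differentiableAt.differentiableWithinAt
  · intro x hx
    rw [interior_Ici] at hx
    have hx0 : 0 < x := lt_trans hs hx
    rw [(hder x hx0).deriv]
    have hDx : D < x ^ 2 := by
      have := Real.sq_sqrt hD.le
      have h' : Real.sqrt D < x := hx
      nlinarith
    set u := D / x ^ 2 with hu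
    have hu0 : 0 < u := by positivity
    have hu1 : u < 1 := by rw [hu, div_lt_one (by positivity)]; exact hDx
    have e1 : D / x = x * u := by rw [hu]; field_simp
    have e2 : -D / x ^ 2 = -u := by rw [hu]; ring
    rw [e1, e2, Real.log_mul hx0.ne' hu0.ne', show x + x * u = x * (1 + u) by ring,
      Real.log_mul hx0.ne' (by positivity)]
    have l1 : Real.log (1 + u) ≤ u := by
      have := Real.log_le_sub_one_of_pos (show 0 < 1 + u by positivity); linarith
    have l2 : Real.log u ≤ u - 1 := Real.log_le_sub_one_of_pos hu0
    nlinarith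

theorem EE_anti_aux (x y x' y' : ℝ) (hy : 0 ≤ y) (hyx : y ≤ x) (hy' : 0 ≤ y') (hyx' : y' ≤ x')
    (hprod : x * y = x' * y') (hsum : x + y ≤ x' + y') : EE x' y' ≤ EE x y := by
  rcases (mul_nonneg (hy.trans hyx) hy).eq_or_lt with h0 | hD
  · have a1 : EE x y = 0 := by
      rcases mul_eq_zero.mp h0.symm with h | h
      · have : y = 0 := by linarith
        subst this; exact EE_zero _
      · subst h; exact EE_zero _
    have a2 : EE x' y' = 0 := by
      rcases mul_eq_zero.mp (hprod ▸ h0.symm) with h | h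
      · have : y' = 0 := by linarith
        subst this; exact EE_zero _
      · subst h; exact EE_zero _
    rw [a1, a2]
  · have hx : 0 < x := by rcases (hy.trans hyx).eq_or_lt with h | h; · simp [← h] at hD
                          exact h
    have hx' : 0 < x' := by
      rcases (hy'.trans hyx').eq_or_lt with h | h
      · rw [hprod] at hD; simp [← h] at hD
      exact h
    have hxx : x ≤ x' := by
      by_contra hc
      push Not at hc
      nlinarith
    have := EE_anti_pos (x * y) hD (a := x) (b := x')
      (Real.sqrt_le_iff.mpr ⟨hx.le, by nlinarith⟩)
      (Real.sqrt_le_iff.mpr ⟨hx'.le, by rw [hprod]; nlinarith⟩) hxx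
    simp only at this
    rw [show x * y / x = y by field_simp, hprod, show x' * y' / x' = y' by field_simp] at this
    exact this

theorem EE_anti (x y x' y' : ℝ) (hx : 0 ≤ x) (hy : 0 ≤ y) (hx' : 0 ≤ x') (hy' : 0 ≤ y')
    (hprod : x * y = x' * y') (hsum : x + y ≤ x' + y') : EE x' y' ≤ EE x y := by
  rcases le_total y x with h | h <;> rcases le_total y' x' with h' | h'
  · exact EE_anti_aux _ _ _ _ hy h hy' h' hprod hsum
  · rw [EE_comm x' y']; apply EE_anti_aux _ _ _ _ hy h hx' h' <;> linarith
  · rw [EE_comm x y]; apply EE_anti_aux _ _ _ _ hx h hy' h' <;> linarith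
  · rw [EE_comm x y, EE_comm x' y']; apply EE_anti_aux _ _ _ _ hx h hx' h' <;> linarith

/-- single-letter coherent information of a diagonal state -/
noncomputable def JJ (pH pV a : ℝ) : ℝ :=
  EE (pH * a) (pV * (1 - a)) - EE ((1 - pH) * a) ((1 - pV) * (1 - a))

theorem JJ_cont (pH pV : ℝ) : Continuous (JJ pH pV) := by
  unfold JJ EE
  fun_prop

theorem JJ_pos (pH pV : ℝ)
    (h1 : 1/2 < pH) (h2 : pH < 1) (h3 : 0 < pV) (h4 : pV < 1 - pH) :
    ∃ a, 0 < a ∧ a < 1 ∧ 0 < JJ pH pV a := by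
  set C : ℝ := pH * Real.log pV - pH * Real.log pH + (1 - pH) * Real.log (1 - pH) - (1 - pH) with hC
  have hd : 0 < 2 * pH - 1 := by linarith
  set l : ℝ := (|C| + 1) / (2 * pH - 1) with hl
  have hl0 : 0 < l := by positivity
  set a := Real.exp (-l) with ha
  have ha0 : 0 < a := Real.exp_pos _
  have ha1 : a < 1 := by rw [ha, Real.exp_lt_one_iff]; linarith
  have hla : Real.log a = -l := Real.log_exp _
  refine ⟨a, ha0, ha1, ?_⟩
  have hb : 0 < 1 - a := by linarith
  have hqH : 0 < 1 - pH := by linarith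
  have hqV : 0 < 1 - pV := by linarith
  have hpH : 0 < pH := by linarith
  have hll : (2 * pH - 1) * l = |C| + 1 := by rw [hl]; field_simp
  -- lower bound
  have L1 : pH * a * (Real.log pV - Real.log pH - Real.log a) ≤ EE (pH * a) (pV * (1 - a)) := by
    set s := pH * a + pV * (1 - a) with hs
    have hs0 : 0 < s := by positivity
    have e1 : Real.log pV ≤ Real.log s := Real.log_le_log h3 (by rw [hs]; nlinarith)
    have e2 : Real.log (pV * (1 - a)) ≤ Real.log s :=
      Real.log_le_log (by positivity) (by rw [hs]; nlinarith [mul_pos hpH ha0])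
    have : EE (pH * a) (pV * (1 - a)) = pH * a * (Real.log s - Real.log pH - Real.log a)
        + pV * (1 - a) * (Real.log s - Real.log (pV * (1 - a))) := by
      unfold EE Real.negMulLog
      rw [← hs, Real.log_mul hpH.ne' ha0.ne', hs]; ring
    rw [this]
    have : 0 ≤ pV * (1 - a) * (Real.log s - Real.log (pV * (1 - a))) :=
      mul_nonneg (by positivity) (by linarith)
    have : pH * a * (Real.log pV - Real.log pH - Real.log a) ≤ pH * a * (Real.log s - Real.log pH - Real.log a) :=
      mul_le_mul_of_nonneg_left (by linarith) (by positivity)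
    linarith
  have L2 : EE ((1 - pH) * a) ((1 - pV) * (1 - a)) ≤
      (1 - pH) * a * (1 - Real.log (1 - pH) - Real.log a) := by
    set z := (1 - pV) * (1 - a) with hz
    have hz0 : 0 < z := by positivity
    set w := (1 - pH) * a with hw
    have hw0 : 0 < w := by positivity
    have e1 : Real.log (w + z) ≤ 0 := Real.log_nonpos (by positivity) (by rw [hw, hz]; nlinarith [mul_pos hpH ha0, mul_pos h3 hb])
    have e2 : z * (Real.log (w + z) - Real.log z) ≤ w := by
      rw [← Real.log_div (by positivity) hz0.ne']
      have := Real.log_le_sub_one_of_pos (show 0 < (w + z) / z by positivity)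
      calc z * Real.log ((w + z) / z) ≤ z * ((w + z) / z - 1) := mul_le_mul_of_nonneg_left this hz0.le
        _ = w := by field_simp; ring
    have e3 : Real.log w = Real.log (1 - pH) + Real.log a := Real.log_mul hqH.ne' ha0.ne'
    have : EE w z = w * Real.log (w + z) - w * Real.log w + z * (Real.log (w + z) - Real.log z) := by
      unfold EE Real.negMulLog; ring
    rw [this, e3]
    nlinarith
  unfold JJ
  have key : 0 < a * (C + (2 * pH - 1) * l) := by
    apply mul_pos ha0
    rw [hll]
    have := neg_abs_le C
    linarith
  rw [hla] at L1 L2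
  rw [hC] at key
  nlinarith

theorem JJ_max (pH pV : ℝ)
    (h1 : 1/2 < pH) (h2 : pH < 1) (h3 : 0 < pV) (h4 : pV < 1 - pH) :
    ∃ a, 0 < a ∧ a < 1 ∧ ∀ x, 0 ≤ x → x ≤ 1 → JJ pH pV x ≤ JJ pH pV a := by
  obtain ⟨a0, p0, p1, p2⟩ := JJ_pos pH pV h1 h2 h3 h4
  obtain ⟨a, ha, hm⟩ := (isCompact_Icc (a := (0:ℝ)) (b := 1)).exists_isMaxOn ⟨0, by simp⟩
    (JJ_cont pH pV).continuousOn
  have hpos : 0 < JJ pH pV a := lt_of_lt_of_le p2 (hm ⟨p0.le, p1.le⟩)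
  refine ⟨a, ?_, ?_, fun x hx hx' => hm ⟨hx, hx'⟩⟩
  · rcases ha.1.eq_or_lt with h | h
    · rw [← h] at hpos; simp [JJ, EE] at hpos
    · exact h
  · rcases ha.2.eq_or_lt with h | h
    · rw [h] at hpos; simp [JJ, EE] at hpos
    · exact h

theorem exists_roots (T D : ℝ) (hT : 0 ≤ T) (hD : 0 ≤ D) (h : 4 * D ≤ T ^ 2) :
    ∃ u v : ℝ, 0 ≤ u ∧ 0 ≤ v ∧ u ≤ v ∧ u + v = T ∧ u * v = D := by
  have hs := Real.sq_sqrt (show 0 ≤ T ^ 2 - 4 * D by linarith)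
  have hs0 := Real.sqrt_nonneg (T ^ 2 - 4 * D)
  have hsT : Real.sqrt (T ^ 2 - 4 * D) ≤ T := Real.sqrt_le_iff.mpr ⟨hT, by linarith⟩
  refine ⟨(T - Real.sqrt (T ^ 2 - 4 * D)) / 2, (T + Real.sqrt (T ^ 2 - 4 * D)) / 2,
    by linarith, by linarith, by linarith, by ring, by nlinarith⟩

theorem vnEnt_blockA (x y z : ℝ) (c : ℂ) (u v : ℝ) (h1 : u + v = x + y)
    (h2 : u * v = x * y - Complex.normSq c) :
    vnEnt !![(x : ℂ), c, 0; (starRingEnd ℂ) c, (y : ℂ), 0; 0, 0, (z : ℂ)]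
      = Real.negMulLog u + Real.negMulLog v + Real.negMulLog z := by
  rw [vnEnt_of_charpoly_s19 _ ?_ ![u, v, z] ?_]
  · simp [Fin.sum_univ_three]
  · ext i j; fin_cases i <;> fin_cases j <;> simp
  · have e1 : (Polynomial.C (u : ℂ)) + Polynomial.C (v : ℂ) = Polynomial.C (x : ℂ) + Polynomial.C (y : ℂ) := by
      rw [← map_add, ← map_add]; congr 1; exact_mod_cast h1
    have e2 : (Polynomial.C (u : ℂ)) * Polynomial.C (v : ℂ) = Polynomial.C (x : ℂ) * Polynomial.C (y : ℂ)
        - Polynomial.C c * Polynomial.C ((starRingEnd ℂ) c) := by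
      rw [← map_mul, ← map_mul, ← map_mul, ← map_sub, Complex.mul_conj]; congr 1; exact_mod_cast h2
    simp only [Matrix.charpoly, Matrix.det_fin_three, Matrix.charmatrix_apply, Fin.prod_univ_three]
    simp
    linear_combination (-(Polynomial.X - Polynomial.C (z:ℂ))) * e2 + (Polynomial.X - Polynomial.C (z:ℂ)) * Polynomial.X * e1

theorem vnEnt_blockB (x y z : ℝ) (c : ℂ) (u v : ℝ) (h1 : u + v = x + y)
    (h2 : u * v = x * y - Complex.normSq c) :
    vnEnt !![(z : ℂ), 0, 0; 0, (x : ℂ), c; 0, (starRingEnd ℂ) c, (y : ℂ)]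
      = Real.negMulLog z + (Real.negMulLog u + Real.negMulLog v) := by
  rw [vnEnt_of_charpoly_s19 _ ?_ ![z, u, v] ?_]
  · simp [Fin.sum_univ_three, add_assoc]
  · ext i j; fin_cases i <;> fin_cases j <;> simp
  · have e1 : (Polynomial.C (u : ℂ)) + Polynomial.C (v : ℂ) = Polynomial.C (x : ℂ) + Polynomial.C (y : ℂ) := by
      rw [← map_add, ← map_add]; congr 1; exact_mod_cast h1
    have e2 : (Polynomial.C (u : ℂ)) * Polynomial.C (v : ℂ) = Polynomial.C (x : ℂ) * Polynomial.C (y : ℂ)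
        - Polynomial.C c * Polynomial.C ((starRingEnd ℂ) c) := by
      rw [← map_mul, ← map_mul, ← map_mul, ← map_sub, Complex.mul_conj]; congr 1; exact_mod_cast h2
    simp only [Matrix.charpoly, Matrix.det_fin_three, Matrix.charmatrix_apply, Fin.prod_univ_three]
    simp
    linear_combination (-(Polynomial.X - Polynomial.C (z:ℂ))) * e2 + (Polynomial.X - Polynomial.C (z:ℂ)) * Polynomial.X * e1

set_option maxHeartbeats 1000000 in
theorem single_le (pH pV : ℝ)
    (h1 : 1/2 < pH) (h2 : pH < 1) (h3 : 0 < pV) (h4 : pV < 1 - pH)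
    (σ : Matrix (Fin 2) (Fin 2) ℂ) (hσ : σ.PosSemidef) (ht : σ.trace = 1) :
    ∃ a, 0 ≤ a ∧ a ≤ 1 ∧ vnEnt (GammaPDL pH pV σ) - vnEnt (GammaPDLc pH pV σ) ≤ JJ pH pV a := by
  have hH := hσ.isHermitian
  have d0 : 0 ≤ σ 0 0 := hσ.diag_nonneg
  have d1 : 0 ≤ σ 1 1 := hσ.diag_nonneg
  have dd := hσ.det_nonneg
  rw [Matrix.det_fin_two] at dd
  have hc : σ 1 0 = (starRingEnd ℂ) (σ 0 1) := by
    have := hH.apply 1 0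
    rw [← this]; rfl
  rw [hc, Complex.mul_conj] at dd
  obtain ⟨a, ha, ea⟩ : ∃ a : ℝ, 0 ≤ a ∧ σ 0 0 = (a : ℂ) :=
    ⟨(σ 0 0).re, (Complex.nonneg_iff.mp d0).1, Complex.ext rfl (Complex.nonneg_iff.mp d0).2.symm⟩
  obtain ⟨b, hb, eb⟩ : ∃ b : ℝ, 0 ≤ b ∧ σ 1 1 = (b : ℂ) :=
    ⟨(σ 1 1).re, (Complex.nonneg_iff.mp d1).1, Complex.ext rfl (Complex.nonneg_iff.mp d1).2.symm⟩
  have hab : a + b = 1 := by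
    rw [Matrix.trace_fin_two, ea, eb] at ht; exact_mod_cast ht
  obtain rfl : b = 1 - a := by linarith
  rw [ea, eb] at dd
  set c := σ 0 1 with hcdef
  set n := Complex.normSq c with hn
  have hn0 : 0 ≤ n := Complex.normSq_nonneg c
  have hdet : 0 ≤ a * (1 - a) - n := by exact_mod_cast dd
  set t := a * (1 - a) - n with htdef
  have hpH : 0 < pH := by linarith
  have hqH : 0 < 1 - pH := by linarith
  have hqV : 0 < 1 - pV := by linarith
  obtain ⟨u, v, hu, hv, -, huv, huv'⟩ := exists_roots (pH * a + pV * (1 - a)) (pH * pV * t)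
    (by positivity) (by positivity) (by
      have : 0 ≤ pH * pV * n := by positivity
      rw [htdef]; nlinarith [sq_nonneg (pH * a - pV * (1 - a))])
  obtain ⟨w, z, hw, hz, -, hwz, hwz'⟩ := exists_roots ((1 - pH) * a + (1 - pV) * (1 - a))
    ((1 - pH) * (1 - pV) * t)
    (by positivity) (by positivity) (by
      have : 0 ≤ (1 - pH) * (1 - pV) * n := by positivity
      rw [htdef]; nlinarith [sq_nonneg ((1 - pH) * a - (1 - pV) * (1 - a))])
  obtain ⟨a', b', ha', hb', hab', hs', hp'⟩ := exists_roots 1 t (by norm_num) hdet (by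
    rw [htdef]; nlinarith [sq_nonneg (2 * a - 1)])
  obtain rfl : b' = 1 - a' := by linarith
  have haa : a' ≤ a := by
    by_contra hcon
    push Not at hcon
    nlinarith
  have hmono : 0 ≤ (pH - pV) * (a - a') := mul_nonneg (by linarith) (by linarith)
  refine ⟨a', ha', by linarith, ?_⟩
  have g1 : vnEnt (GammaPDL pH pV σ) = Real.negMulLog u + Real.negMulLog v
      + Real.negMulLog (1 - (pH * a + pV * (1 - a))) := by
    rw [← vnEnt_blockA (pH * a) (pV * (1 - a)) (1 - (pH * a + pV * (1 - a)))
      ((Real.sqrt (pH * pV) : ℂ) * c) u v huv ?_]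
    · congr 1
      unfold GammaPDL
      rw [ht, ea, eb, hc, ← hcdef]
      ext i j; fin_cases i <;> fin_cases j <;> simp
      ring
    · rw [huv', Complex.normSq_mul, Complex.normSq_ofReal, Real.mul_self_sqrt (by positivity)]
      rw [htdef]; ring
  have g2 : vnEnt (GammaPDLc pH pV σ) = Real.negMulLog (pH * a + pV * (1 - a))
      + (Real.negMulLog w + Real.negMulLog z) := by
    rw [← vnEnt_blockB ((1 - pH) * a) ((1 - pV) * (1 - a)) (pH * a + pV * (1 - a))
      ((Real.sqrt ((1 - pH) * (1 - pV)) : ℂ) * c) w z hwz ?_]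
    · congr 1
      unfold GammaPDLc
      rw [ea, eb, hc, ← hcdef]
      ext i j; fin_cases i <;> fin_cases j <;> simp
    · rw [hwz', Complex.normSq_mul, Complex.normSq_ofReal, Real.mul_self_sqrt (by positivity)]
      rw [htdef]; ring
  have e1 : EE u v ≤ EE (pH * a') (pV * (1 - a')) := by
    apply EE_anti _ _ _ _ (by positivity) (by positivity) hu hv
    · rw [huv', ← hp']; ring
    · rw [huv]; linarith
  have e2 : EE ((1 - pH) * a') ((1 - pV) * (1 - a')) ≤ EE w z := by
    apply EE_anti _ _ _ _ hw hz (by positivity) (by positivity)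
    · rw [hwz', ← hp']; ring
    · rw [hwz]; linarith
  unfold JJ
  have e3 : vnEnt (GammaPDL pH pV σ) - vnEnt (GammaPDLc pH pV σ) = EE u v - EE w z := by
    rw [g1, g2]; unfold EE
    rw [huv, hwz, show (1 - pH) * a + (1 - pV) * (1 - a) = 1 - (pH * a + pV * (1 - a)) by ring]
    ring
  rw [e3]; linarith

theorem kron_sum (K : Fin 3 → Matrix (Fin 3) (Fin 2) ℂ) (X Y : Matrix (Fin 2) (Fin 2) ℂ) :
    ∑ i, ∑ j, (K i ⊗ₖ K j) * (X ⊗ₖ Y) * (K i ⊗ₖ K j)ᴴ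
      = (∑ i, K i * X * (K i)ᴴ) ⊗ₖ (∑ j, K j * Y * (K j)ᴴ) := by
  simp only [Matrix.conjTranspose_kronecker, ← Matrix.mul_kronecker_mul]
  ext ⟨a, b⟩ ⟨c, d⟩
  simp only [Matrix.sum_apply, Matrix.kroneckerMap_apply, Finset.sum_mul_sum]

/-- the two-letter state -/
noncomputable def rho2 (a : ℝ) : Matrix (Fin 2 × Fin 2) (Fin 2 × Fin 2) ℂ :=
  (Matrix.diagonal ![(a : ℂ), ((1 - a : ℝ) : ℂ)]) ⊗ₖ (Matrix.diagonal ![(a : ℂ), ((1 - a : ℝ) : ℂ)])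
    + ((a * (1 - a) : ℝ) : ℂ) • (Matrix.single 0 1 (1 : ℂ) ⊗ₖ Matrix.single 1 0 (1 : ℂ)
      + Matrix.single 1 0 (1 : ℂ) ⊗ₖ Matrix.single 0 1 (1 : ℂ))

theorem rho2_trace (a : ℝ) : (rho2 a).trace = 1 := by
  unfold rho2
  simp only [Matrix.trace_add, Matrix.trace_smul, Matrix.trace_kronecker, Matrix.trace_diagonal]
  simp [Matrix.trace_fin_two]

theorem rho2_psd (a : ℝ) (h0 : 0 ≤ a) (h1 : a ≤ 1) : (rho2 a).PosSemidef := by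
  have hb : 0 ≤ 1 - a := by linarith
  have e : rho2 a = ((a ^ 2 : ℝ) : ℂ) • Matrix.vecMulVec (Pi.single (0, 0) 1) (star (Pi.single (0, 0) 1))
      + (((1 - a) ^ 2 : ℝ) : ℂ) • Matrix.vecMulVec (Pi.single (1, 1) 1) (star (Pi.single (1, 1) 1))
      + ((a * (1 - a) : ℝ) : ℂ) • Matrix.vecMulVec (Pi.single (0, 1) 1 + Pi.single (1, 0) 1)
        (star (Pi.single (0, 1) 1 + Pi.single (1, 0) 1)) := by
    unfold rho2
    ext ⟨i, j⟩ ⟨k, l⟩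
    fin_cases i <;> fin_cases j <;> fin_cases k <;> fin_cases l <;>
      simp [Matrix.vecMulVec_apply, Pi.single_apply, Matrix.single_apply, pow_two, mul_comm]
  rw [e]
  refine ((?_ : Matrix.PosSemidef _).add ?_).add ?_
  · exact (Matrix.posSemidef_vecMulVec_self_star _).smul (by exact_mod_cast (by positivity))
  · exact (Matrix.posSemidef_vecMulVec_self_star _).smul (by exact_mod_cast (by positivity))
  · exact (Matrix.posSemidef_vecMulVec_self_star _).smul (by exact_mod_cast (by positivity))

theorem vnEnt_two (K : Fin 3 → Matrix (Fin 3) (Fin 2) ℂ) (a : ℝ) (d : Fin 3 → ℝ) (p q : Fin 3)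
    (hpq : p ≠ q) (r : ℝ) (h0 : 0 ≤ a) (h1 : a ≤ 1)
    (hd : ∑ i, d i = 1)
    (hK1 : ∑ i, K i * Matrix.diagonal ![(a : ℂ), ((1 - a : ℝ) : ℂ)] * (K i)ᴴ
      = Matrix.diagonal (fun i => (d i : ℂ)))
    (hK2 : ∑ i, K i * Matrix.single (0 : Fin 2) (1 : Fin 2) (1 : ℂ) * (K i)ᴴ = Matrix.single p q (r : ℂ))
    (hK3 : ∑ i, K i * Matrix.single (1 : Fin 2) (0 : Fin 2) (1 : ℂ) * (K i)ᴴ = Matrix.single q p (r : ℂ))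
    (hm : d p * d q = a * (1 - a) * (r * r)) :
    vnEnt (∑ i, ∑ j, (K i ⊗ₖ K j) * rho2 a * (K i ⊗ₖ K j)ᴴ)
      = 2 * (∑ i, Real.negMulLog (d i)) - 2 * (a * (1 - a) * (r * r)) * Real.log 2 := by
  have hne : ((p, q) : Fin 3 × Fin 3) ≠ (q, p) := by
    intro h; exact hpq (Prod.ext_iff.mp h).1
  have hb : 0 ≤ 1 - a := by linarith
  have key := vnEnt_pair (fun i => d i.1 * d i.2) (p, q) (q, p) hne (a * (1 - a) * (r * r))
    hm (by rw [← hm]; ring) (mul_nonneg (mul_nonneg h0 hb) (mul_self_nonneg r))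
  have e1 : ∑ i, ∑ j, (K i ⊗ₖ K j) * rho2 a * (K i ⊗ₖ K j)ᴴ
      = Matrix.diagonal (fun i : Fin 3 × Fin 3 => ((d i.1 * d i.2 : ℝ) : ℂ))
        + (Matrix.single (p, q) (q, p) ((a * (1 - a) * (r * r) : ℝ) : ℂ)
          + Matrix.single (q, p) (p, q) ((a * (1 - a) * (r * r) : ℝ) : ℂ)) := by
    unfold rho2
    simp only [Matrix.mul_add, Matrix.add_mul, Matrix.mul_smul, Matrix.smul_mul, smul_add,
      Finset.sum_add_distrib, ← Finset.smul_sum, kron_sum, hK1, hK2, hK3]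
    simp only [Matrix.diagonal_kronecker_diagonal, Matrix.single_kronecker_single, Matrix.smul_single]
    push_cast
    simp
  rw [e1, key]
  congr 1
  rw [Fintype.sum_prod_type]
  simp only [Real.negMulLog_mul, Finset.sum_add_distrib, ← Finset.sum_mul, ← Finset.mul_sum, hd]
  ring

theorem Kr_diag (pH pV a : ℝ) (h1 : 0 < pH) (h2 : pH < 1) (h3 : 0 < pV) (h4 : pV < 1) :
    ∑ i, KrPDL pH pV i * Matrix.diagonal ![(a : ℂ), ((1 - a : ℝ) : ℂ)] * (KrPDL pH pV i)ᴴ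
      = Matrix.diagonal (fun i => ((![pH * a, pV * (1 - a), 1 - (pH * a + pV * (1 - a))] i : ℝ) : ℂ)) := by
  have s1 : (Real.sqrt pH : ℂ) * Real.sqrt pH = pH := by exact_mod_cast Real.mul_self_sqrt h1.le
  have s2 : (Real.sqrt pV : ℂ) * Real.sqrt pV = pV := by exact_mod_cast Real.mul_self_sqrt h3.le
  have s3 : (Real.sqrt (1 - pH) : ℂ) * Real.sqrt (1 - pH) = 1 - pH := by
    exact_mod_cast Real.mul_self_sqrt (show 0 ≤ 1 - pH by linarith)
  have s4 : (Real.sqrt (1 - pV) : ℂ) * Real.sqrt (1 - pV) = 1 - pV := by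
    exact_mod_cast Real.mul_self_sqrt (show 0 ≤ 1 - pV by linarith)
  ext i j
  simp only [Matrix.sum_apply, Matrix.mul_apply, Fin.sum_univ_three, Fin.sum_univ_two,
    Matrix.conjTranspose_apply, Matrix.diagonal_apply]
  fin_cases i <;> fin_cases j <;> simp [KrPDL]
  · linear_combination (a : ℂ) * s1
  · linear_combination (1 - a : ℂ) * s2
  · linear_combination (a : ℂ) * s3 + (1 - a : ℂ) * s4

theorem Lr_diag (pH pV a : ℝ) (h1 : 0 < pH) (h2 : pH < 1) (h3 : 0 < pV) (h4 : pV < 1) :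
    ∑ i, LrPDL pH pV i * Matrix.diagonal ![(a : ℂ), ((1 - a : ℝ) : ℂ)] * (LrPDL pH pV i)ᴴ
      = Matrix.diagonal (fun i => ((![pH * a + pV * (1 - a), (1 - pH) * a, (1 - pV) * (1 - a)] i : ℝ) : ℂ)) := by
  have s1 : (Real.sqrt pH : ℂ) * Real.sqrt pH = pH := by exact_mod_cast Real.mul_self_sqrt h1.le
  have s2 : (Real.sqrt pV : ℂ) * Real.sqrt pV = pV := by exact_mod_cast Real.mul_self_sqrt h3.le
  have s3 : (Real.sqrt (1 - pH) : ℂ) * Real.sqrt (1 - pH) = 1 - pH := by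
    exact_mod_cast Real.mul_self_sqrt (show 0 ≤ 1 - pH by linarith)
  have s4 : (Real.sqrt (1 - pV) : ℂ) * Real.sqrt (1 - pV) = 1 - pV := by
    exact_mod_cast Real.mul_self_sqrt (show 0 ≤ 1 - pV by linarith)
  ext i j
  simp only [Matrix.sum_apply, Matrix.mul_apply, Fin.sum_univ_three, Fin.sum_univ_two,
    Matrix.conjTranspose_apply, Matrix.diagonal_apply]
  fin_cases i <;> fin_cases j <;> simp [LrPDL]
  · linear_combination (a : ℂ) * s1 + (1 - a : ℂ) * s2
  · linear_combination (a : ℂ) * s3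
  · linear_combination (1 - a : ℂ) * s4

theorem Kr_off (pH pV : ℝ) :
    (∑ i, KrPDL pH pV i * Matrix.single (0 : Fin 2) (1 : Fin 2) (1 : ℂ) * (KrPDL pH pV i)ᴴ
      = Matrix.single 0 1 ((Real.sqrt pH * Real.sqrt pV : ℝ) : ℂ)) ∧
    (∑ i, KrPDL pH pV i * Matrix.single (1 : Fin 2) (0 : Fin 2) (1 : ℂ) * (KrPDL pH pV i)ᴴ
      = Matrix.single 1 0 ((Real.sqrt pH * Real.sqrt pV : ℝ) : ℂ)) := by
  constructor <;> ext i j <;>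
    simp only [Matrix.sum_apply, Matrix.mul_apply, Fin.sum_univ_three, Fin.sum_univ_two,
      Matrix.conjTranspose_apply, Matrix.single_apply] <;>
    fin_cases i <;> fin_cases j <;> simp [KrPDL, mul_comm]

theorem Lr_off (pH pV : ℝ) :
    (∑ i, LrPDL pH pV i * Matrix.single (0 : Fin 2) (1 : Fin 2) (1 : ℂ) * (LrPDL pH pV i)ᴴ
      = Matrix.single 1 2 ((Real.sqrt (1 - pH) * Real.sqrt (1 - pV) : ℝ) : ℂ)) ∧
    (∑ i, LrPDL pH pV i * Matrix.single (1 : Fin 2) (0 : Fin 2) (1 : ℂ) * (LrPDL pH pV i)ᴴ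
      = Matrix.single 2 1 ((Real.sqrt (1 - pH) * Real.sqrt (1 - pV) : ℝ) : ℂ)) := by
  constructor <;> ext i j <;>
    simp only [Matrix.sum_apply, Matrix.mul_apply, Fin.sum_univ_three, Fin.sum_univ_two,
      Matrix.conjTranspose_apply, Matrix.single_apply] <;>
    fin_cases i <;> fin_cases j <;> simp [LrPDL, mul_comm]

theorem two_letter (pH pV a : ℝ) (h1 : 0 < pH) (h2 : pH < 1) (h3 : 0 < pV) (h4 : pV < 1)
    (ha : 0 ≤ a) (ha' : a ≤ 1) :
    vnEnt (∑ i, ∑ j, (KrPDL pH pV i ⊗ₖ KrPDL pH pV j) * rho2 a *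
                (KrPDL pH pV i ⊗ₖ KrPDL pH pV j)ᴴ)
            - vnEnt (∑ i, ∑ j, (LrPDL pH pV i ⊗ₖ LrPDL pH pV j) * rho2 a *
                (LrPDL pH pV i ⊗ₖ LrPDL pH pV j)ᴴ)
      = 2 * JJ pH pV a + 2 * (a * (1 - a)) * (1 - pH - pV) * Real.log 2 := by
  have s1 := Real.mul_self_sqrt h1.le
  have s2 := Real.mul_self_sqrt h3.le
  have s3 := Real.mul_self_sqrt (show 0 ≤ 1 - pH by linarith)
  have s4 := Real.mul_self_sqrt (show 0 ≤ 1 - pV by linarith)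
  have r1 : (Real.sqrt pH * Real.sqrt pV) * (Real.sqrt pH * Real.sqrt pV) = pH * pV := by
    rw [mul_mul_mul_comm, s1, s2]
  have r2 : (Real.sqrt (1 - pH) * Real.sqrt (1 - pV)) * (Real.sqrt (1 - pH) * Real.sqrt (1 - pV))
      = (1 - pH) * (1 - pV) := by
    rw [mul_mul_mul_comm, s3, s4]
  rw [vnEnt_two (KrPDL pH pV) a _ 0 1 (by decide) _ ha ha' ?_ (Kr_diag pH pV a h1 h2 h3 h4)
      (Kr_off pH pV).1 (Kr_off pH pV).2 ?_,
    vnEnt_two (LrPDL pH pV) a _ 1 2 (by decide) _ ha ha' ?_ (Lr_diag pH pV a h1 h2 h3 h4)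
      (Lr_off pH pV).1 (Lr_off pH pV).2 ?_, r1, r2]
  · simp only [Fin.sum_univ_three, JJ, EE]
    simp only [Matrix.cons_val_zero, Matrix.cons_val_one, Matrix.cons_val]
    rw [show (1 - pH) * a + (1 - pV) * (1 - a) = 1 - (pH * a + pV * (1 - a)) by ring]
    ring
  · simp [Fin.sum_univ_three]; ring
  · rw [r2]; simp; ring
  · simp [Fin.sum_univ_three]
  · rw [r1]; simp; ring

theorem vnEnt_le {n : Type*} [Fintype n] [DecidableEq n] (A : Matrix n n ℂ) (hA : A.PosSemidef) :
    vnEnt A ≤ Fintype.card n := by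
  rw [vnEnt, dif_pos hA.isHermitian]
  calc _ ≤ ∑ i : n, (1 : ℝ) := by
        apply Finset.sum_le_sum
        intro i _
        have h0 := hA.eigenvalues_nonneg i
        have := Real.negMulLog_le_one_sub_self h0
        unfold Real.negMulLog at this
        linarith
    _ = _ := by simp

theorem vnEnt_nonneg {n : Type*} [Fintype n] [DecidableEq n] (A : Matrix n n ℂ) (hA : A.PosSemidef)
    (ht : A.trace = 1) : 0 ≤ vnEnt A := by
  rw [vnEnt, dif_pos hA.isHermitian]
  apply Finset.sum_nonneg
  intro i _
  have h0 := hA.eigenvalues_nonneg i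
  have hs : ∑ i, hA.isHermitian.eigenvalues i = 1 := by
    have := hA.isHermitian.trace_eq_sum_eigenvalues
    rw [ht] at this
    have h' := congrArg Complex.re this
    simpa using h'.symm
  have h1 : hA.isHermitian.eigenvalues i ≤ 1 := by
    rw [← hs]
    exact Finset.single_le_sum (fun j _ => hA.eigenvalues_nonneg j) (Finset.mem_univ i)
  have := Real.negMulLog_nonneg h0 h1
  unfold Real.negMulLog at this
  linarith

theorem out_psd (K : Fin 3 → Matrix (Fin 3) (Fin 2) ℂ) (ρ : Matrix (Fin 2 × Fin 2) (Fin 2 × Fin 2) ℂ)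
    (h : ρ.PosSemidef) : (∑ i, ∑ j, (K i ⊗ₖ K j) * ρ * (K i ⊗ₖ K j)ᴴ).PosSemidef := by
  apply Matrix.posSemidef_sum
  intro i _
  apply Matrix.posSemidef_sum
  intro j _
  exact h.mul_mul_conjTranspose_same _

theorem out_trace (K : Fin 3 → Matrix (Fin 3) (Fin 2) ℂ) (ρ : Matrix (Fin 2 × Fin 2) (Fin 2 × Fin 2) ℂ)
    (hK : ∑ i, (K i)ᴴ * K i = 1) :
    (∑ i, ∑ j, (K i ⊗ₖ K j) * ρ * (K i ⊗ₖ K j)ᴴ).trace = ρ.trace := by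
  have e : ∑ i, ∑ j, (K i ⊗ₖ K j)ᴴ * (K i ⊗ₖ K j) = 1 := by
    simp only [Matrix.conjTranspose_kronecker, ← Matrix.mul_kronecker_mul]
    rw [← Matrix.one_kronecker_one, ← hK]
    ext ⟨a, b⟩ ⟨c, d⟩
    simp only [Matrix.sum_apply, Matrix.kroneckerMap_apply, Finset.sum_mul_sum]
  simp only [Matrix.trace_sum]
  have : ∀ i j, ((K i ⊗ₖ K j) * ρ * (K i ⊗ₖ K j)ᴴ).trace
      = ((K i ⊗ₖ K j)ᴴ * (K i ⊗ₖ K j) * ρ).trace := by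
    intro i j
    rw [Matrix.trace_mul_comm, ← Matrix.mul_assoc]
  simp only [this, ← Matrix.trace_sum, ← Matrix.sum_mul, e, Matrix.one_mul]

theorem Lr_tp (pH pV : ℝ) (h1 : 0 < pH) (h2 : pH < 1) (h3 : 0 < pV) (h4 : pV < 1) :
    ∑ i, (LrPDL pH pV i)ᴴ * LrPDL pH pV i = 1 := by
  have s1 : (Real.sqrt pH : ℂ) * Real.sqrt pH = pH := by exact_mod_cast Real.mul_self_sqrt h1.le
  have s2 : (Real.sqrt pV : ℂ) * Real.sqrt pV = pV := by exact_mod_cast Real.mul_self_sqrt h3.le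
  have s3 : (Real.sqrt (1 - pH) : ℂ) * Real.sqrt (1 - pH) = 1 - pH := by
    exact_mod_cast Real.mul_self_sqrt (show 0 ≤ 1 - pH by linarith)
  have s4 : (Real.sqrt (1 - pV) : ℂ) * Real.sqrt (1 - pV) = 1 - pV := by
    exact_mod_cast Real.mul_self_sqrt (show 0 ≤ 1 - pV by linarith)
  ext i j
  simp only [Matrix.sum_apply, Matrix.mul_apply, Fin.sum_univ_three,
    Matrix.conjTranspose_apply, Matrix.one_apply]
  fin_cases i <;> fin_cases j <;> simp [LrPDL]
  · linear_combination s1 + s3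
  · linear_combination s2 + s4

/-- for 1/2 < p_H < 1 and 0 < p_V < 1 − p_H, the two-letter coherent
information of the generalized erasure channel of the polarization dependent loss
operation is strictly superadditive. -/
theorem pdl_coherent_information_superadditive (pH pV : ℝ)
    (h1 : 1/2 < pH) (h2 : pH < 1) (h3 : 0 < pV) (h4 : pV < 1 - pH) :
    2 * sSup {x : ℝ | ∃ σ : Matrix (Fin 2) (Fin 2) ℂ, σ.PosSemidef ∧ σ.trace = 1 ∧
        x = vnEnt (GammaPDL pH pV σ) - vnEnt (GammaPDLc pH pV σ)}
      < sSup {x : ℝ | ∃ ρ : Matrix (Fin 2 × Fin 2) (Fin 2 × Fin 2) ℂ,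
          ρ.PosSemidef ∧ ρ.trace = 1 ∧
          x = vnEnt (∑ i, ∑ j, (KrPDL pH pV i ⊗ₖ KrPDL pH pV j) * ρ *
                (KrPDL pH pV i ⊗ₖ KrPDL pH pV j)ᴴ)
            - vnEnt (∑ i, ∑ j, (LrPDL pH pV i ⊗ₖ LrPDL pH pV j) * ρ *
                (LrPDL pH pV i ⊗ₖ LrPDL pH pV j)ᴴ)} := by
  obtain ⟨a, ha0, ha1, hmax⟩ := JJ_max pH pV h1 h2 h3 h4
  have hpH : 0 < pH := by linarith
  have hpV : pV < 1 := by linarith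
  have A : sSup {x : ℝ | ∃ σ : Matrix (Fin 2) (Fin 2) ℂ, σ.PosSemidef ∧ σ.trace = 1 ∧
        x = vnEnt (GammaPDL pH pV σ) - vnEnt (GammaPDLc pH pV σ)} ≤ JJ pH pV a := by
    apply csSup_le
    · refine ⟨_, Matrix.diagonal ![1, 0], ?_, ?_, rfl⟩
      · rw [Matrix.posSemidef_diagonal_iff]
        intro i; fin_cases i <;> simp
      · simp
    · rintro x ⟨σ, hσ, ht, rfl⟩
      obtain ⟨a', h0, h1', hle⟩ := single_le pH pV h1 h2 h3 h4 σ hσ ht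
      exact hle.trans (hmax a' h0 h1')
  have B := two_letter pH pV a hpH h2 h3 hpV ha0.le ha1.le
  have G : 0 < 2 * (a * (1 - a)) * (1 - pH - pV) * Real.log 2 := by
    have l := Real.log_pos (show (1:ℝ) < 2 by norm_num)
    have b : 0 < 1 - a := by linarith
    have c : 0 < 1 - pH - pV := by linarith
    positivity
  refine lt_of_lt_of_le (b := 2 * JJ pH pV a + 2 * (a * (1 - a)) * (1 - pH - pV) * Real.log 2)
    (by linarith) (le_csSup ?_ ⟨rho2 a, rho2_psd a ha0.le ha1.le, rho2_trace a, B.symm⟩)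
  refine ⟨9, ?_⟩
  rintro x ⟨ρ, hρ, ht, rfl⟩
  have b1 := vnEnt_le _ (out_psd (KrPDL pH pV) ρ hρ)
  have b2 := vnEnt_nonneg _ (out_psd (LrPDL pH pV) ρ hρ)
    (by rw [out_trace _ _ (Lr_tp pH pV hpH h2 h3 hpV), ht])
  have b3 : ((Fintype.card (Fin 3 × Fin 3) : ℕ) : ℝ) = 9 := by norm_num [Fintype.card_prod]
  rw [b3] at b1
  linarith
end
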